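/- arXiv:2205.13930 — 8 statements merged into one kernel-verified Lean document; each statement's English description precedes it below -/
import Mathlib

section
/- Let k ≥ 2 and T ≥ 2 be integers, let μ* be a real with 32√(k·log k·log T/T) ≤ μ* ≤ 1, let n be a positive integer with n ≥ 8√(T·log T/(k·log k)), and let μ̂ ≥ 0 be a real with |μ* − μ̂| ≤ 3√(μ*·log T/n). Then μ̂ + 4√(μ̂·log T/n) ≥ μ*. (Deterministic core of Lemma 3.4: under the good event, the Nash confidence bound of the optimal arm is at least its true mean μ* throughout Phase II.) -/
/-!
Put `a = log T / n`. Multiplying the lower bounds on `μ*` and `n` cancels `k` and `T` and leaves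
`16² a ≤ μ*`. Hence `√(μ* a) ≤ μ* / 16`, so `μ̂ ≥ (1 - 3/16) μ* ≥ (3/4)² μ*`, and therefore
`4 √(μ̂ a) ≥ 3 √(μ* a)`, which absorbs the deviation of `μ̂` from `μ*`.
-/

section SqrtDeviation

variable {a c d m s x : ℝ}

lemma sqrt_mul_le_div_of_sq_mul_le (hs : 0 < s) (hm : 0 ≤ m) (ham : s ^ 2 * a ≤ m) :
    √(m * a) ≤ m / s := by
  refine Real.sqrt_le_iff.mpr ⟨by positivity, ?_⟩
  rw [div_pow, le_div_iff₀ (by positivity)]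
  calc m * a * s ^ 2 = m * (s ^ 2 * a) := by ring
    _ ≤ m * m := by gcongr
    _ = m ^ 2 := (sq m).symm

lemma mul_sqrt_mul_le_mul_sqrt_mul (hd : 0 ≤ d) (ha : 0 ≤ a) (h : c ^ 2 * m ≤ d ^ 2 * x) :
    c * √(m * a) ≤ d * √(x * a) := by
  calc c * √(m * a) ≤ |c| * √(m * a) := by gcongr; exact le_abs_self c
    _ = √(c ^ 2 * m * a) := by
      rw [mul_assoc, Real.sqrt_mul (sq_nonneg c), Real.sqrt_sq_eq_abs]
    _ ≤ √(d ^ 2 * x * a) := by gcongr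
    _ = d * √(x * a) := by rw [mul_assoc, Real.sqrt_mul (sq_nonneg d), Real.sqrt_sq hd]

theorem le_add_mul_sqrt_mul_of_sub_le (ha : 0 ≤ a) (hc : 0 ≤ c) (hd : 0 ≤ d) (hs : 0 < s)
    (hcd : c ^ 2 ≤ d ^ 2 * (1 - c / s)) (ham : s ^ 2 * a ≤ m)
    (hdev : m - x ≤ c * √(m * a)) : m ≤ x + d * √(x * a) := by
  have hm : 0 ≤ m := ham.trans' (by positivity)
  have hx : (1 - c / s) * m ≤ x := by
    have : c * √(m * a) ≤ c * (m / s) := by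
      gcongr
      exact sqrt_mul_le_div_of_sq_mul_le hs hm ham
    linear_combination hdev + this
  have hcmp : c ^ 2 * m ≤ d ^ 2 * x :=
    calc c ^ 2 * m ≤ d ^ 2 * (1 - c / s) * m := by gcongr
      _ = d ^ 2 * ((1 - c / s) * m) := mul_assoc _ _ _
      _ ≤ d ^ 2 * x := by gcongr
  exact sub_le_iff_le_add'.mp (hdev.trans (mul_sqrt_mul_le_mul_sqrt_mul hd ha hcmp))

end SqrtDeviation

lemma sqrt_mul_div_mul_sqrt_mul_div {p q t : ℝ} (hp : 0 < p) (hq : 0 ≤ q) (ht : 0 < t) :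
    √(p * q / t) * √(t * q / p) = q := by
  rw [← Real.sqrt_mul (by positivity), show p * q / t * (t * q / p) = q ^ 2 by field_simp,
    Real.sqrt_sq hq]

theorem ncb_of_optimal_arm_ge_mean_general {k T n μstar μhat : ℝ} (hk : 1 < k) (hT : 1 < T)
    (hμ : 32 * √(k * Real.log k * Real.log T / T) ≤ μstar)
    (hn : 8 * √(T * Real.log T / (k * Real.log k)) ≤ n)
    (hdev : μstar - μhat ≤ 3 * √(μstar * Real.log T / n)) :
    μstar ≤ μhat + 4 * √(μhat * Real.log T / n) := by
  have hlogk : 0 < Real.log k := Real.log_pos hk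
  have hlogT : 0 < Real.log T := Real.log_pos hT
  have hn_pos : 0 < n := hn.trans_lt' (by positivity)
  have hratio : 16 ^ 2 * (Real.log T / n) ≤ μstar := by
    rw [← mul_div_assoc, div_le_iff₀ hn_pos]
    calc 16 ^ 2 * Real.log T
        = 32 * √(k * Real.log k * Real.log T / T) *
            (8 * √(T * Real.log T / (k * Real.log k))) := by
          rw [mul_mul_mul_comm, sqrt_mul_div_mul_sqrt_mul_div (by positivity) hlogT.le
            (by positivity)]
          norm_num
      _ ≤ μstar * n := mul_le_mul hμ hn (by positivity) (hμ.trans' (by positivity))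
  rw [mul_div_assoc] at hdev ⊢
  exact le_add_mul_sqrt_mul_of_sub_le (by positivity) (by norm_num) (by norm_num)
    (by norm_num) (by norm_num) hratio hdev

/-- Deterministic core of Lemma 3.4: under the good event, the Nash confidence bound
`μ̂ + 4√(μ̂ log T / n)` of the optimal arm is at least its true mean `μ*`. -/
theorem ncb_of_optimal_arm_ge_mean (k T : ℕ) (hk : 2 ≤ k) (hT : 2 ≤ T)
    (μstar : ℝ)
    (hμs_lb : 32 * Real.sqrt ((k : ℝ) * Real.log k * Real.log T / T) ≤ μstar)
    (hμs_ub : μstar ≤ 1)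
    (n : ℕ) (hn0 : 0 < n)
    (hn : 8 * Real.sqrt ((T : ℝ) * Real.log T / ((k : ℝ) * Real.log k)) ≤ (n : ℝ))
    (μhat : ℝ) (hμhat : 0 ≤ μhat)
    (hconc : |μstar - μhat| ≤ 3 * Real.sqrt (μstar * Real.log T / n)) :
    μhat + 4 * Real.sqrt (μhat * Real.log T / n) ≥ μstar :=
  ncb_of_optimal_arm_ge_mean_general (by exact_mod_cast hk) (by exact_mod_cast hT) hμs_lb hn
    ((le_abs_self _).trans hconc)
end

section
/- Let k ≥ 2 and T ≥ 2 be integers, let μ* be a real with 32√(k·log k·log T/T) ≤ μ* ≤ 1, let r be a positive integer with r ≥ 8√(T·log T/(k·log k)), and let μ̂ be a real with 0 ≤ μ̂ ≤ 9√(k·log k·log T)/√T. Then μ̂ + 4√(μ̂·log T/r) < μ*. (Deterministic core of Lemma 3.5: under the good event, any arm with mean at most 6√(k·log k·log T)/√T has Nash confidence bound strictly below μ* and hence is never pulled in Phase II.) -/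
/-!
The Nash confidence bound increases with the empirical mean and decreases with the number of
samples, so it is largest when both sit at their thresholds. Put `L = log T`, `a = k log k`,
`s = √(a L / T)` and `q = √(T L / a)`. Since `s q = L`, the value there, for mean `α s` and `β q`
samples, is a pure multiple `(α + 4 √(α / β)) s` of the scale `s`; for `α = 9` and `β = 8` the
factor is less than `32`.
-/

theorem sqrt_mul_div_mul_sqrt_mul_div_s5 {a b L : ℝ} (ha : 0 < a) (hb : 0 < b) (hL : 0 ≤ L) :
    √(a * L / b) * √(b * L / a) = L := by
  rw [← Real.sqrt_mul (by positivity), show a * L / b * (b * L / a) = L ^ 2 by field_simp,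
    Real.sqrt_sq hL]

/-- The Nash confidence bound, at horizon `T`, of an arm with empirical mean `m` after `r` samples.
The sample count is real so that the bound can be evaluated at a non-integral threshold. -/
noncomputable def nashConfidenceBound (T m r : ℝ) : ℝ :=
  m + 4 * √(m * Real.log T / r)

theorem nashConfidenceBound_le_nashConfidenceBound {T m m' r r' : ℝ} (hT : 1 ≤ T) (hm : 0 ≤ m)
    (hmm' : m ≤ m') (hr' : 0 < r') (hr'r : r' ≤ r) :
    nashConfidenceBound T m r ≤ nashConfidenceBound T m' r' := by
  have hL : 0 ≤ Real.log T := Real.log_nonneg hT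
  have hm' : 0 ≤ m' := hm.trans hmm'
  unfold nashConfidenceBound
  gcongr

theorem nashConfidenceBound_mul_sqrt_mul_sqrt {a T : ℝ} (α β : ℝ) (ha : 0 < a) (hT : 1 < T) :
    nashConfidenceBound T (α * √(a * Real.log T / T)) (β * √(T * Real.log T / a)) =
      (α + 4 * √(α / β)) * √(a * Real.log T / T) := by
  have hT0 : 0 < T := one_pos.trans hT
  have hL : 0 < Real.log T := Real.log_pos hT
  have hsq := sqrt_mul_div_mul_sqrt_mul_div_s5 ha hT0 hL.le
  unfold nashConfidenceBound
  set s := √(a * Real.log T / T)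
  set q := √(T * Real.log T / a)
  have hs : 0 ≤ s := Real.sqrt_nonneg _
  have hq : q ≠ 0 := by positivity
  have hratio : α * s * Real.log T / (β * q) = α / β * s ^ 2 := by
    rw [← hsq]
    field_simp
  rw [hratio, Real.sqrt_mul' _ (sq_nonneg s), Real.sqrt_sq hs]
  ring

theorem nashConfidenceBound_le {a T m r α β : ℝ} (ha : 0 < a) (hT : 1 < T) (hβ : 0 < β)
    (hm : 0 ≤ m) (hmα : m ≤ α * √(a * Real.log T / T)) (hβr : β * √(T * Real.log T / a) ≤ r) :
    nashConfidenceBound T m r ≤ (α + 4 * √(α / β)) * √(a * Real.log T / T) := by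
  have hL : 0 < Real.log T := Real.log_pos hT
  rw [← nashConfidenceBound_mul_sqrt_mul_sqrt α β ha hT]
  exact nashConfidenceBound_le_nashConfidenceBound hT.le hm hmα (by positivity) hβr

theorem ncb_of_bad_arm_lt_optimal_general {k T μstar r μhat : ℝ} (hk : 1 < k) (hT : 1 < T)
    (hμstar : 32 * √(k * Real.log k * Real.log T / T) ≤ μstar)
    (hr : 8 * √(T * Real.log T / (k * Real.log k)) ≤ r) (hμhat0 : 0 ≤ μhat)
    (hμhat : μhat ≤ 9 * √(k * Real.log k * Real.log T) / √T) :
    nashConfidenceBound T μhat r < μstar := by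
  have hL : 0 < Real.log T := Real.log_pos hT
  have ha : 0 < k * Real.log k := mul_pos (one_pos.trans hk) (Real.log_pos hk)
  have hfactor : (9 : ℝ) + 4 * √(9 / 8) < 32 := by
    have : √(9 / 8 : ℝ) < 2 := (Real.sqrt_lt' two_pos).mpr (by norm_num)
    linarith
  rw [mul_div_assoc, ← Real.sqrt_div (by positivity)] at hμhat
  calc nashConfidenceBound T μhat r
      ≤ (9 + 4 * √(9 / 8)) * √(k * Real.log k * Real.log T / T) :=
        nashConfidenceBound_le ha hT (by norm_num) hμhat0 hμhat hr
    _ < 32 * √(k * Real.log k * Real.log T / T) := by gcongr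
    _ ≤ μstar := hμstar

/-- Deterministic core of Lemma 3.5: under the good event, any arm whose empirical mean is
at most `9√(k log k log T)/√T` (after `r ≥ 8√(T log T/(k log k))` samples) has Nash
confidence bound `μ̂ + 4√(μ̂ log T / r)` strictly below `μ*`. -/
theorem ncb_of_bad_arm_lt_optimal (k T : ℕ) (hk : 2 ≤ k) (hT : 2 ≤ T)
    (μstar : ℝ)
    (hμs_lb : 32 * Real.sqrt ((k : ℝ) * Real.log k * Real.log T / T) ≤ μstar)
    (hμs_ub : μstar ≤ 1)
    (r : ℕ) (hr0 : 0 < r)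
    (hr : 8 * Real.sqrt ((T : ℝ) * Real.log T / ((k : ℝ) * Real.log k)) ≤ (r : ℝ))
    (μhat : ℝ) (hμhat0 : 0 ≤ μhat)
    (hμhat : μhat ≤ 9 * Real.sqrt ((k : ℝ) * Real.log k * Real.log T) / Real.sqrt T) :
    μhat + 4 * Real.sqrt (μhat * Real.log T / r) < μstar := by
  exact ncb_of_bad_arm_lt_optimal_general (by exact_mod_cast hk) (by exact_mod_cast hT) hμs_lb hr
    hμhat0 hμhat
end

section
/- Let k ≥ 2 and T ≥ 2 be integers, let μ* be a real with 32√(k·log k·log T/T) ≤ μ* ≤ 1, let μ be a real with 0 < μ ≤ μ*, let n be a positive integer with n ≥ 8√(T·log T/(k·log k)), and let μ̂ ≥ 0 be a real such that |μ − μ̂| ≤ 3√(μ·log T/n) and μ̂ + 4√(μ̂·log T/n) ≥ μ*. Then μ ≥ μ* − 8√(μ*·log T/n). (Deterministic core of Lemma 3.6: any arm pulled in Phase II, having Nash confidence bound at least μ* after n = T_i − 1 samples, has mean close to the optimal μ*.) -/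
/-!
Write `r = log T / n`. The concentration bound `μ̂ ≤ μ + 3√(μ r)` gives `√μ̂ ≤ √μ + (3/2)√r` by
completing the square. Inserting this in the width of the Nash confidence bound yields
`μ* ≤ μ + 7√(μ r) + 6 r`. Multiplying the lower bounds on `μ*` and `n` cancels `k log k / T` and
gives `256 r ≤ μ*`, so `6 r ≤ √(μ* r)` and the lower-order term costs at most one more `√(μ* r)`.
-/

lemma sqrt_le_sqrt_add_of_le_add_mul_sqrt {a x y r : ℝ} (ha : 0 ≤ a) (hy : 0 ≤ y)
    (hxy : x ≤ y + a * √(y * r)) : √x ≤ √y + a / 2 * √r := by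
  refine Real.sqrt_le_iff.2 ⟨by positivity, ?_⟩
  calc
    x ≤ √y ^ 2 + a * (√y * √r) := by rwa [Real.sq_sqrt hy, ← Real.sqrt_mul hy]
    _ ≤ √y ^ 2 + a * (√y * √r) + (a / 2 * √r) ^ 2 := le_add_of_nonneg_right (sq_nonneg _)
    _ = (√y + a / 2 * √r) ^ 2 := by ring

lemma le_add_mul_sqrt_add_of_le_add_mul_sqrt {a b x y z r : ℝ} (ha : 0 ≤ a) (hb : 0 ≤ b)
    (hx : 0 ≤ x) (hy : 0 ≤ y) (hr : 0 ≤ r) (hxy : x ≤ y + a * √(y * r))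
    (hzx : z ≤ x + b * √(x * r)) : z ≤ y + (a + b) * √(y * r) + a * b / 2 * r := by
  have hsqrt : √x ≤ √y + a / 2 * √r := sqrt_le_sqrt_add_of_le_add_mul_sqrt ha hy hxy
  calc
    z ≤ x + b * (√x * √r) := by rwa [← Real.sqrt_mul hx]
    _ ≤ y + a * √(y * r) + b * ((√y + a / 2 * √r) * √r) := by gcongr
    _ = y + a * √(y * r) + b * (√y * √r) + a * b / 2 * √r ^ 2 := by ring
    _ = y + (a + b) * √(y * r) + a * b / 2 * r := by
      rw [← Real.sqrt_mul hy, Real.sq_sqrt hr]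
      ring

lemma sqrt_mul_div_mul_sqrt_mul_div_s6 {c t l : ℝ} (hc : 0 < c) (ht : 0 < t) (hl : 0 ≤ l) :
    √(c * l / t) * √(t * l / c) = l := by
  rw [← Real.sqrt_mul (by positivity), show c * l / t * (t * l / c) = l ^ 2 by field_simp,
    Real.sqrt_sq hl]

lemma mul_mul_le_mul_of_mul_sqrt_le {a b c t l m n : ℝ} (ha : 0 ≤ a) (hb : 0 ≤ b) (hc : 0 < c)
    (ht : 0 < t) (hl : 0 ≤ l) (hm : a * √(c * l / t) ≤ m) (hn : b * √(t * l / c) ≤ n) :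
    a * b * l ≤ m * n := by
  calc
    a * b * l = a * √(c * l / t) * (b * √(t * l / c)) := by
      rw [mul_mul_mul_comm, sqrt_mul_div_mul_sqrt_mul_div_s6 hc ht hl]
    _ ≤ m * n := mul_le_mul hm hn (by positivity) (le_trans (by positivity) hm)

theorem mean_of_pulled_arm_close_to_optimal_general {μstar μ μhat l n : ℝ} (hμ : 0 ≤ μ)
    (hμμs : μ ≤ μstar) (hμhat : 0 ≤ μhat) (hl : 0 ≤ l) (hn : 0 < n) (hln : 36 * l ≤ μstar * n)
    (hconc : μhat ≤ μ + 3 * √(μ * l / n)) (hncb : μstar ≤ μhat + 4 * √(μhat * l / n)) :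
    μstar - 8 * √(μstar * l / n) ≤ μ := by
  rw [mul_div_assoc] at hconc hncb ⊢
  have hr : 0 ≤ l / n := by positivity
  have hbound : μstar ≤ μ + (3 + 4) * √(μ * (l / n)) + 3 * 4 / 2 * (l / n) :=
    le_add_mul_sqrt_add_of_le_add_mul_sqrt (by norm_num) (by norm_num) hμhat hμ hr hconc hncb
  have hmono : √(μ * (l / n)) ≤ √(μstar * (l / n)) := by gcongr
  have hlower : 6 * (l / n) ≤ √(μstar * (l / n)) := by
    refine Real.le_sqrt_of_sq_le ?_
    calc
      (6 * (l / n)) ^ 2 = 36 * l / n * (l / n) := by ring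
      _ ≤ μstar * (l / n) := mul_le_mul_of_nonneg_right ((div_le_iff₀ hn).2 hln) hr
  linarith

/-- Deterministic core of Lemma 3.6: any arm pulled in Phase II, having Nash confidence
bound `μ̂ + 4√(μ̂ log T / n) ≥ μ*` after `n` samples, has mean `μ` close to the optimal
mean `μ*`, namely `μ ≥ μ* − 8√(μ* log T / n)`. -/
theorem mean_of_pulled_arm_close_to_optimal (k T : ℕ) (hk : 2 ≤ k) (hT : 2 ≤ T)
    (μstar : ℝ)
    (hμs_lb : 32 * Real.sqrt ((k : ℝ) * Real.log k * Real.log T / T) ≤ μstar)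
    (hμs_ub : μstar ≤ 1)
    (μ : ℝ) (hμ0 : 0 < μ) (hμμs : μ ≤ μstar)
    (n : ℕ) (hn0 : 0 < n)
    (hn : 8 * Real.sqrt ((T : ℝ) * Real.log T / ((k : ℝ) * Real.log k)) ≤ (n : ℝ))
    (μhat : ℝ) (hμhat : 0 ≤ μhat)
    (hconc : |μ - μhat| ≤ 3 * Real.sqrt (μ * Real.log T / n))
    (hncb : μhat + 4 * Real.sqrt (μhat * Real.log T / n) ≥ μstar) :
    μ ≥ μstar - 8 * Real.sqrt (μstar * Real.log T / n) := by
  have hlogk : 0 < Real.log k := Real.log_pos (Nat.one_lt_cast.2 hk)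
  have hlogT : 0 ≤ Real.log T := Real.log_natCast_nonneg T
  have hlog : 32 * 8 * Real.log T ≤ μstar * n :=
    mul_mul_le_mul_of_mul_sqrt_le (by norm_num) (by norm_num) (by positivity) (by positivity)
      hlogT hμs_lb hn
  exact mean_of_pulled_arm_close_to_optimal_general hμ0.le hμμs hμhat hlogT
    (Nat.cast_pos.2 hn0) (by linarith) (by linarith [neg_le_of_abs_le hconc]) hncb
end

section
/- Let T ≥ 2, k ≥ 1 and 1 ≤ ℓ ≤ k be integers, let μ* ∈ (0, 1] be real, let m_1, …, m_ℓ be positive integers with ∑_{i=1}^ℓ m_i ≤ T, and let n_1, …, n_ℓ be positive integers with n_i ≥ m_i and μ*·n_i ≥ 256·log T for every i. Then ∏_{i=1}^ℓ (1 − 8√(log T/(μ*·n_i)))^{m_i/T} ≥ 1 − 16√(k·log T/(μ*·T)). (The key deterministic product inequality in the Phase II analysis of Theorem 3.1, combining the numeric inequality (1−x)^a ≥ 1−2ax with the Cauchy–Schwarz inequality.) -/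
/-! Since `exp t ≥ 1 + t` and `log (1 - x) ≥ -2 x` on `[0, 1/2]`, a weighted product
`∏ (1 - x_i) ^ w_i` is at least `1 - 2 ∑ w_i x_i`. The weights `w_i = m_i / T` have total mass at
most `1`, so by Cauchy–Schwarz the average of `√(L / (μ n_i))` is at most the square root of
`∑ (m_i / T) * (L / (μ n_i))`, and each of these at most `k` terms is bounded by `L / (μ T)`
because `m_i ≤ n_i`. -/

variable {ι : Type*} {s : Finset ι}

theorem neg_two_mul_le_log_one_sub {x : ℝ} (hx0 : 0 ≤ x) (hx : x ≤ 1 / 2) :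
    -(2 * x) ≤ Real.log (1 - x) := by
  have hpos : 0 < 1 - x := by linarith
  have hinv : (1 - x)⁻¹ ≤ 1 + 2 * x := by
    rw [inv_le_iff_one_le_mul₀ hpos]
    nlinarith
  linarith [Real.one_sub_inv_le_log_of_pos hpos]

theorem one_add_sum_mul_log_le_prod_rpow {w y : ι → ℝ} (hy : ∀ i ∈ s, 0 < y i) :
    1 + ∑ i ∈ s, w i * Real.log (y i) ≤ ∏ i ∈ s, y i ^ w i := by
  calc 1 + ∑ i ∈ s, w i * Real.log (y i)
      ≤ Real.exp (∑ i ∈ s, w i * Real.log (y i)) := by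
        rw [add_comm]
        exact Real.add_one_le_exp _
    _ = ∏ i ∈ s, y i ^ w i := by
        rw [Real.exp_sum]
        exact Finset.prod_congr rfl fun i hi => by rw [Real.rpow_def_of_pos (hy i hi), mul_comm]

theorem one_sub_two_mul_sum_le_prod_one_sub_rpow {w x : ι → ℝ} (hw : ∀ i ∈ s, 0 ≤ w i)
    (hx0 : ∀ i ∈ s, 0 ≤ x i) (hx : ∀ i ∈ s, x i ≤ 1 / 2) :
    1 - 2 * ∑ i ∈ s, w i * x i ≤ ∏ i ∈ s, (1 - x i) ^ w i := by
  calc 1 - 2 * ∑ i ∈ s, w i * x i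
      = 1 + ∑ i ∈ s, w i * -(2 * x i) := by
        simp only [mul_neg, Finset.sum_neg_distrib, mul_left_comm _ (2 : ℝ), ← Finset.mul_sum,
          sub_eq_add_neg]
    _ ≤ 1 + ∑ i ∈ s, w i * Real.log (1 - x i) := by
        gcongr with i hi
        · exact hw i hi
        · exact neg_two_mul_le_log_one_sub (hx0 i hi) (hx i hi)
    _ ≤ ∏ i ∈ s, (1 - x i) ^ w i :=
        one_add_sum_mul_log_le_prod_rpow fun i hi => by linarith [hx i hi]

theorem sum_mul_sqrt_le_sqrt_sum_mul {w v : ι → ℝ} (hw : ∀ i ∈ s, 0 ≤ w i)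
    (hw1 : ∑ i ∈ s, w i ≤ 1) (hv : ∀ i ∈ s, 0 ≤ v i) :
    ∑ i ∈ s, w i * √(v i) ≤ √(∑ i ∈ s, w i * v i) := by
  have hwv : ∀ i ∈ s, 0 ≤ w i * v i := fun i hi => mul_nonneg (hw i hi) (hv i hi)
  apply Real.le_sqrt_of_sq_le
  calc (∑ i ∈ s, w i * √(v i)) ^ 2
      ≤ (∑ i ∈ s, w i) * ∑ i ∈ s, w i * v i :=
        Finset.sum_sq_le_sum_mul_sum_of_sq_le_mul s hw hwv fun i hi => by
          rw [mul_pow, Real.sq_sqrt (hv i hi), sq, mul_assoc]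
    _ ≤ ∑ i ∈ s, w i * v i := mul_le_of_le_one_left (Finset.sum_nonneg hwv) hw1

theorem sum_div_mul_div_le_card_mul_div {m n : ι → ℝ} {c T : ℝ} (hc : 0 ≤ c) (hT : 0 ≤ T)
    (hn : ∀ i ∈ s, 0 < n i) (hmn : ∀ i ∈ s, m i ≤ n i) :
    ∑ i ∈ s, m i / T * (c / n i) ≤ s.card * (c / T) := by
  rw [← nsmul_eq_mul]
  refine Finset.sum_le_card_nsmul s _ _ fun i hi => ?_
  calc m i / T * (c / n i) = m i / n i * (c / T) := by ring
    _ ≤ c / T :=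
        mul_le_of_le_one_left (div_nonneg hc hT) ((div_le_one (hn i hi)).2 (hmn i hi))

theorem phase_two_product_bound_general {m n : ι → ℝ} {k L T μ : ℝ} (hT : 0 < T)
    (hk : s.card ≤ k) (hL : 0 ≤ L) (hμ : 0 < μ)
    (hm : ∀ i ∈ s, 0 ≤ m i) (hsum : ∑ i ∈ s, m i ≤ T)
    (hn : ∀ i ∈ s, 0 < n i) (hmn : ∀ i ∈ s, m i ≤ n i) (hμn : ∀ i ∈ s, 256 * L ≤ μ * n i) :
    1 - 16 * √(k * L / (μ * T)) ≤ ∏ i ∈ s, (1 - 8 * √(L / (μ * n i))) ^ (m i / T) := by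
  have hw : ∀ i ∈ s, 0 ≤ m i / T := fun i hi => div_nonneg (hm i hi) hT.le
  have hw1 : ∑ i ∈ s, m i / T ≤ 1 := by rwa [← Finset.sum_div, div_le_one hT]
  have hv : ∀ i ∈ s, 0 ≤ L / (μ * n i) := fun i hi => div_nonneg hL (mul_pos hμ (hn i hi)).le
  have hx : ∀ i ∈ s, 8 * √(L / (μ * n i)) ≤ 1 / 2 := fun i hi => by
    have : √(L / (μ * n i)) ≤ 1 / 16 := by
      rw [Real.sqrt_le_left (by norm_num), div_le_iff₀ (mul_pos hμ (hn i hi))]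
      linarith [hμn i hi]
    linarith
  have hmean : ∑ i ∈ s, m i / T * (L / (μ * n i)) ≤ k * L / (μ * T) := by
    calc ∑ i ∈ s, m i / T * (L / (μ * n i)) = ∑ i ∈ s, m i / T * (L / μ / n i) := by
          simp only [div_div]
      _ ≤ s.card * (L / μ / T) :=
          sum_div_mul_div_le_card_mul_div (div_nonneg hL hμ.le) hT.le hn hmn
      _ ≤ k * (L / μ / T) := by gcongr
      _ = k * L / (μ * T) := by rw [div_div, mul_div_assoc]
  calc 1 - 16 * √(k * L / (μ * T))
      ≤ 1 - 16 * ∑ i ∈ s, m i / T * √(L / (μ * n i)) := by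
        gcongr
        exact (sum_mul_sqrt_le_sqrt_sum_mul hw hw1 hv).trans (Real.sqrt_le_sqrt hmean)
    _ = 1 - 2 * ∑ i ∈ s, m i / T * (8 * √(L / (μ * n i))) := by
        simp only [mul_left_comm _ (8 : ℝ), ← Finset.mul_sum]
        ring
    _ ≤ ∏ i ∈ s, (1 - 8 * √(L / (μ * n i))) ^ (m i / T) :=
        one_sub_two_mul_sum_le_prod_one_sub_rpow hw (fun _ _ => by positivity) hx

/-- The key deterministic product inequality in the Phase II analysis of Theorem 3.1:
if `ℓ ≤ k`, `∑ m_i ≤ T`, `n_i ≥ m_i` and `μ* n_i ≥ 256 log T` for every `i`, then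
`∏_i (1 − 8√(log T/(μ* n_i)))^(m_i/T) ≥ 1 − 16√(k log T/(μ* T))`.
Here `^` denotes the real power `Real.rpow`. -/
theorem phase_two_product_bound (T k ℓ : ℕ) (hT : 2 ≤ T) (hk : 1 ≤ k)
    (hℓ1 : 1 ≤ ℓ) (hℓk : ℓ ≤ k)
    (μstar : ℝ) (hμs0 : 0 < μstar) (hμs1 : μstar ≤ 1)
    (m n : Fin ℓ → ℕ)
    (hm : ∀ i, 0 < m i) (hsum : ∑ i, m i ≤ T)
    (hn : ∀ i, 0 < n i) (hnm : ∀ i, m i ≤ n i)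
    (hμn : ∀ i, μstar * n i ≥ 256 * Real.log T) :
    ∏ i, (1 - 8 * Real.sqrt (Real.log T / (μstar * n i))) ^ ((m i : ℝ) / T) ≥
      1 - 16 * Real.sqrt ((k : ℝ) * Real.log T / (μstar * T)) := by
  exact phase_two_product_bound_general (by positivity) (by simpa) (Real.log_natCast_nonneg T) hμs0
    (by simp) (mod_cast hsum) (mod_cast fun i _ => hn i) (mod_cast fun i _ => hnm i)
    fun i _ => hμn i
end

section
/- Fix c = 3. Let k ≥ 2 and T ≥ 2 be integers, let μ_1, …, μ_k ∈ [0, 1] with μ* := max_i μ_i > 0, and set S := c²·log T/μ*; assume 192S ≤ T. Let y_{i,s} ∈ [0, 1] for 1 ≤ i ≤ k, 1 ≤ s ≤ T be arbitrary reals and define μ̂_{i,s} := (1/s)·∑_{r=1}^s y_{i,r}. Assume: (E2) for every arm i with μ_i > μ*/64 and every integer s with 64S ≤ s ≤ T, |μ_i − μ̂_{i,s}| ≤ c√(μ_i·log T/s); and (E3) for every arm j with μ_j ≤ μ*/64 and every integer s with 64S ≤ s ≤ T, μ̂_{j,s} < μ*/32. Then for every arm i and every integer n with 1 ≤ n ≤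 192S, n·μ̂_{i,n} < 210·c²·log T. (Lemma tau:lower of the paper: under the good event, the total observed reward of every arm stays low until 192S samples.) -/
/-- Empirical mean of arm `i` based on its first `s` observed rewards
`y i 0, …, y i (s-1)` (out of `T` available rewards). -/
noncomputable def empiricalMean {k T : ℕ} (y : Fin k → Fin T → ℝ) (i : Fin k) (s : ℕ) : ℝ :=
  (1 / (s : ℝ)) * ∑ r : Fin T, if (r : ℕ) < s then y i r else 0

/-!
Nonnegative rewards make the total reward of an arm monotone in the sample count, so it suffices
to bound it at `N = ⌊192 S⌋`, which lies in the range `64 S ≤ N ≤ T` of both events. Write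
`a = c² L = S μ*`, where `L` stands for `log T`. If `μ_i ≤ μ*/64`, then `E3` bounds the total
reward of arm `i` by `N μ*/32 ≤ 6 a`. Otherwise `E2` bounds it by `N μ_i + √(a · N μ_i)`, which is
at most `(192 + √192) a < 210 a` because `N μ_i ≤ 192 a`.
-/

lemma natCast_mul_empiricalMean {k T : ℕ} (y : Fin k → Fin T → ℝ) (i : Fin k) (s : ℕ) :
    (s : ℝ) * empiricalMean y i s = ∑ r : Fin T, if (r : ℕ) < s then y i r else 0 := by
  rcases eq_or_ne s 0 with rfl | hs
  · simp
  · rw [empiricalMean, ← mul_assoc, mul_one_div_cancel (Nat.cast_ne_zero.mpr hs), one_mul]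

lemma monotone_natCast_mul_empiricalMean {k T : ℕ} {y : Fin k → Fin T → ℝ} {i : Fin k}
    (hy : ∀ r, 0 ≤ y i r) : Monotone fun s : ℕ ↦ (s : ℝ) * empiricalMean y i s := by
  intro m n hmn
  simp only [natCast_mul_empiricalMean]
  refine Finset.sum_le_sum fun r _ ↦ ?_
  split_ifs with hm hn hn
  · exact le_rfl
  · exact absurd (hm.trans_le hmn) hn
  · exact hy r
  · exact le_rfl

lemma mul_sqrt_div_self {x : ℝ} (hx : 0 ≤ x) (v : ℝ) : x * √(v / x) = √(x * v) := by
  rw [Real.sqrt_div' v hx, Real.sqrt_mul hx, mul_div_left_comm, Real.div_sqrt, mul_comm]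

lemma mul_sqrt_le_sqrt_sq_mul (c x : ℝ) : c * √x ≤ √(c ^ 2 * x) := by
  rw [Real.sqrt_mul (sq_nonneg c), Real.sqrt_sq_eq_abs]
  gcongr
  exact le_abs_self c

lemma mul_le_add_sqrt_of_le_add_mul_sqrt_div {n x m v c : ℝ} (hn : 0 ≤ n)
    (hx : x ≤ m + c * √(v / n)) : n * x ≤ n * m + √(c ^ 2 * (n * v)) :=
  calc n * x ≤ n * (m + c * √(v / n)) := by gcongr
    _ = n * m + c * √(n * v) := by rw [← mul_sqrt_div_self hn]; ring
    _ ≤ n * m + √(c ^ 2 * (n * v)) := by gcongr; exact mul_sqrt_le_sqrt_sq_mul c _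

lemma add_sqrt_mul_le_mul_of_le_mul {a b κ : ℝ} (ha : 0 ≤ a) (hb : b ≤ κ * a) :
    b + √(a * b) ≤ (κ + √κ) * a :=
  calc b + √(a * b) ≤ κ * a + √(κ * a ^ 2) :=
        add_le_add hb (Real.sqrt_le_sqrt (by linarith [mul_le_mul_of_nonneg_left hb ha]))
    _ = (κ + √κ) * a := by rw [Real.sqrt_mul' κ (sq_nonneg a), Real.sqrt_sq ha, add_mul]

lemma mul_le_mul_of_le_add_mul_sqrt_div {n x m c L κ : ℝ} (hn : 0 ≤ n) (hcL : 0 ≤ c ^ 2 * L)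
    (hx : x ≤ m + c * √(m * L / n)) (hm : n * m ≤ κ * (c ^ 2 * L)) :
    n * x ≤ (κ + √κ) * (c ^ 2 * L) :=
  calc n * x ≤ n * m + √(c ^ 2 * (n * (m * L))) := mul_le_add_sqrt_of_le_add_mul_sqrt_div hn hx
    _ = n * m + √(c ^ 2 * L * (n * m)) := by ring_nf
    _ ≤ (κ + √κ) * (c ^ 2 * L) := add_sqrt_mul_le_mul_of_le_mul hcL hm

theorem total_reward_low_until_192S_general {k T : ℕ} {c L μstar S : ℝ}
    {μ : Fin k → ℝ} {y : Fin k → Fin T → ℝ}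
    (hμ : ∀ i, μ i ≤ μstar) (hμstar : 0 < μstar)
    (hS : S = c ^ 2 * L / μstar) (hST : 192 * S ≤ (T : ℝ)) (hy : ∀ i s, 0 ≤ y i s)
    (hE2 : ∀ i, μstar / 64 < μ i → ∀ s : ℕ, 64 * S ≤ (s : ℝ) → s ≤ T →
      empiricalMean y i s ≤ μ i + c * √(μ i * L / s))
    (hE3 : ∀ j, μ j ≤ μstar / 64 → ∀ s : ℕ, 64 * S ≤ (s : ℝ) → s ≤ T →
      empiricalMean y j s ≤ μstar / 32) :
    ∀ i, ∀ n : ℕ, 1 ≤ n → (n : ℝ) ≤ 192 * S →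
      (n : ℝ) * empiricalMean y i n < 210 * c ^ 2 * L := by
  intro i n hn hnS
  have h_one_le : 1 ≤ 192 * S := (Nat.one_le_cast.mpr hn).trans hnS
  have hSμ : S * μstar = c ^ 2 * L := by rw [hS, div_mul_cancel₀ _ hμstar.ne']
  have ha : 0 < c ^ 2 * L := hSμ ▸ mul_pos (by linarith) hμstar
  set N := ⌊192 * S⌋₊
  have hN : (N : ℝ) ≤ 192 * S := Nat.floor_le (by linarith)
  have hN64 : 64 * S ≤ N := by linarith [Nat.div_two_lt_floor h_one_le]
  have hNT : N ≤ T := by exact_mod_cast hN.trans hST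
  have hNμ : N * μstar ≤ 192 * (c ^ 2 * L) := by
    rw [← hSμ, ← mul_assoc]; gcongr
  rw [mul_assoc]
  refine (monotone_natCast_mul_empiricalMean (hy i) (Nat.le_floor hnS)).trans_lt ?_
  rcases le_or_gt (μ i) (μstar / 64) with hi | hi
  · calc N * empiricalMean y i N ≤ N * (μstar / 32) := by gcongr; exact hE3 i hi N hN64 hNT
      _ < 210 * (c ^ 2 * L) := by linarith
  · have hNμi : N * μ i ≤ 192 * (c ^ 2 * L) :=
      (mul_le_mul_of_nonneg_left (hμ i) N.cast_nonneg).trans hNμ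
    have hsqrt : √192 < (18 : ℝ) := by rw [Real.sqrt_lt'] <;> norm_num
    calc N * empiricalMean y i N ≤ (192 + √192) * (c ^ 2 * L) :=
          mul_le_mul_of_le_add_mul_sqrt_div N.cast_nonneg ha.le (hE2 i hi N hN64 hNT) hNμi
      _ < 210 * (c ^ 2 * L) := by gcongr; linarith

/-- Lemma tau:lower (with `c = 3`): under the concentration events `E2` and `E3`, for
every arm `i` and every sample count `1 ≤ n ≤ 192 S` (where `S = c² log T / μ*`), the
total observed reward satisfies `n · μ̂_{i,n} < 210 c² log T`. -/
theorem total_reward_low_until_192S (c : ℝ) (hc : c = 3)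
    (k T : ℕ) (hk : 2 ≤ k) (hT : 2 ≤ T)
    (μ : Fin k → ℝ) (hμ : ∀ i, μ i ∈ Set.Icc (0 : ℝ) 1)
    (μstar : ℝ) (hμstar : IsGreatest (Set.range μ) μstar) (hμs0 : 0 < μstar)
    (S : ℝ) (hS : S = c ^ 2 * Real.log T / μstar) (hST : 192 * S ≤ (T : ℝ))
    (y : Fin k → Fin T → ℝ) (hy : ∀ i s, y i s ∈ Set.Icc (0 : ℝ) 1)
    (hE2 : ∀ i : Fin k, μ i > μstar / 64 → ∀ s : ℕ, 64 * S ≤ (s : ℝ) → s ≤ T →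
      |μ i - empiricalMean y i s| ≤ c * Real.sqrt (μ i * Real.log T / s))
    (hE3 : ∀ j : Fin k, μ j ≤ μstar / 64 → ∀ s : ℕ, 64 * S ≤ (s : ℝ) → s ≤ T →
      empiricalMean y j s < μstar / 32) :
    ∀ i : Fin k, ∀ n : ℕ, 1 ≤ n → (n : ℝ) ≤ 192 * S →
      (n : ℝ) * empiricalMean y i n < 210 * c ^ 2 * Real.log T :=
  total_reward_low_until_192S_general (fun i ↦ hμstar.2 ⟨i, rfl⟩) hμs0 hS hST (fun i s ↦ (hy i s).1)
    (fun i hi s hs hsT ↦ by linarith [(abs_le.mp (hE2 i hi s hs hsT)).1])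
    fun j hj s hs hsT ↦ (hE3 j hj s hs hsT).le
end

section
/- Fix c = 3. Let k ≥ 2 and T ≥ 2 be integers, let μ_1, …, μ_k ∈ [0, 1] with μ* := max_i μ_i > 0, set S := c²·log T/μ*, and let W be a real with √T ≤ W ≤ T; assume 968kS ≤ T. Let u : {1, …, T} → {1, …, k} be any sequence of arm choices and let y_{i,s} ∈ [0, 1] for 1 ≤ i ≤ k, 1 ≤ s ≤ T be arbitrary reals; define n_i(r) := #{t ≤ r : u(t) = i}, μ̂_{i,s} := (1/s)·∑_{r=1}^s y_{i,r}, and the total reward R_i(r) := ∑_{s=1}^{n_i(r)} y_{i,s}. Assume: (E1) for every integer r with 128kS ≤ r ≤ T and every arm i, r/(2k) ≤ n_i(r) ≤ 3r/(2k); (E2) for every arm i with μ_i > μ*/64 and every integer s with 64S ≤ s ≤ T, |μ_i − μ̂_{i,s}| ≤ c√(μ_i·log T/s); (E3) for every arm j with μ_j ≤ μ*/64 and every integer s with 64S ≤ s ≤ T, μ̂_{j,s} < μ*/32. Then there exists an integer r ≤ T with max_i R_i(r) > 420·c²·log W, and the least such integer τ satisfies 128kS ≤ τ ≤ 968kS.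 (Lemma tau:anytime of the paper.) -/
/-!
Write `A = c² log T = S μ*`. For an arm with mean `m` pulled `n` times, a deviation
`c √(m log T / n)` of the empirical mean is a deviation of at most `√(x A)` of the total reward
from `x = n m`, and at `x = a² A` the extreme values `x ± √(x A)` are `(a² ± a) A`. By round
`128 k S` every arm has been pulled at most `196 S` times, so with `a = 14` an arm covered by `E2`
has total reward at most `210 A`; an arm covered by `E3` stays far below that, and
`210 A ≤ 420 c² log W` because `log T ≤ 2 log W`. By round `968 k S` the best arm has been pulled
more than `441 S` times, so with `a = 21` its total reward exceeds `420 A ≥ 420 c² log W`.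
-/

/-- `pullCount u i r` = number of rounds `t` among the first `r` uniform-sampling rounds
in which arm `i` is chosen. -/
def pullCount {k T : ℕ} (u : Fin T → Fin k) (i : Fin k) (r : ℕ) : ℕ :=
  (Finset.univ.filter fun t : Fin T => (t : ℕ) < r ∧ u t = i).card

/-- Empirical mean of arm `i` based on its first `s` observed rewards. -/
noncomputable def empMean12 {k T : ℕ} (y : Fin k → Fin T → ℝ) (i : Fin k) (s : ℕ) : ℝ :=
  (1 / (s : ℝ)) * ∑ r : Fin T, if (r : ℕ) < s then y i r else 0

/-- `totalReward u y i r` = sum of the first `pullCount u i r` observed rewards of arm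
`i`, i.e. the total reward observed for arm `i` during the first `r` rounds. -/
noncomputable def totalReward {k T : ℕ} (u : Fin T → Fin k) (y : Fin k → Fin T → ℝ)
    (i : Fin k) (r : ℕ) : ℝ :=
  ∑ s : Fin T, if (s : ℕ) < pullCount u i r then y i s else 0

section SquareRootDeviation

theorem abs_mul_sub_mul_le_sqrt {c L m e n : ℝ} (hc : 0 ≤ c) (hn : 0 < n)
    (h : |m - e| ≤ c * √(m * L / n)) : |n * m - n * e| ≤ √(n * m * (c ^ 2 * L)) :=
  calc |n * m - n * e| = n * |m - e| := by rw [← mul_sub, abs_mul, abs_of_pos hn]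
    _ ≤ n * (c * √(m * L / n)) := mul_le_mul_of_nonneg_left h hn.le
    _ = √((n * c) ^ 2 * (m * L / n)) := by
      rw [Real.sqrt_mul (sq_nonneg _), Real.sqrt_sq (by positivity), mul_assoc]
    _ = √(n * m * (c ^ 2 * L)) := by congr 1; field_simp

theorem add_sqrt_mul_le {a x A : ℝ} (ha : 0 ≤ a) (hA : 0 ≤ A) (hx : x ≤ a ^ 2 * A) :
    x + √(x * A) ≤ (a ^ 2 + a) * A := by
  have hsqrt : √(x * A) ≤ a * A := Real.sqrt_le_iff.2 ⟨by positivity, by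
    calc x * A ≤ a ^ 2 * A * A := mul_le_mul_of_nonneg_right hx hA
      _ = (a * A) ^ 2 := by ring⟩
  linarith

theorem lt_sub_sqrt_mul {a x A : ℝ} (ha : 1 < a) (hA : 0 ≤ A) (hx : a ^ 2 * A < x) :
    (a ^ 2 - a) * A < x - √(x * A) := by
  have ha0 : 0 < a := one_pos.trans ha
  have hx0 : 0 < x := lt_of_le_of_lt (by positivity) hx
  have hsqrt : √(x * A) ≤ x / a := Real.sqrt_le_iff.2 ⟨by positivity, by
    rw [div_pow, le_div_iff₀ (by positivity)]
    calc x * A * a ^ 2 = x * (a ^ 2 * A) := by ring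
      _ ≤ x * x := mul_le_mul_of_nonneg_left hx.le hx0.le
      _ = x ^ 2 := (sq x).symm⟩
  calc (a ^ 2 - a) * A = (1 - 1 / a) * (a ^ 2 * A) := by field_simp
    _ < (1 - 1 / a) * x :=
      mul_lt_mul_of_pos_left hx (sub_pos.2 ((div_lt_one ha0).2 ha))
    _ = x - x / a := by ring
    _ ≤ x - √(x * A) := sub_le_sub_left hsqrt x

end SquareRootDeviation

section UniformSampling

variable {k T : ℕ} {u : Fin T → Fin k} {y : Fin k → Fin T → ℝ} {i : Fin k}

theorem pullCount_mono (u : Fin T → Fin k) (i : Fin k) : Monotone (pullCount u i) :=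
  fun _ _ h => Finset.card_le_card <|
    Finset.monotone_filter_right _ fun _ _ ht => ⟨ht.1.trans_le h, ht.2⟩

theorem pullCount_le (u : Fin T → Fin k) (i : Fin k) (r : ℕ) : pullCount u i r ≤ T :=
  (Finset.card_le_univ _).trans_eq (Fintype.card_fin T)

theorem totalReward_mono (u : Fin T → Fin k) (hy : ∀ s, 0 ≤ y i s) :
    Monotone (totalReward u y i) := by
  intro r r' h
  refine Finset.sum_le_sum fun s _ => ?_
  have hcount := pullCount_mono u i h
  split_ifs with hs hs'
  exacts [le_rfl, absurd (hs.trans_le hcount) hs', hy s, le_rfl]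

theorem totalReward_eq_mul_empMean12 (u : Fin T → Fin k) (y : Fin k → Fin T → ℝ)
    (i : Fin k) (r : ℕ) :
    totalReward u y i r = pullCount u i r * empMean12 y i (pullCount u i r) := by
  rcases eq_or_ne (pullCount u i r : ℝ) 0 with h | h
  · simp [totalReward, Nat.cast_eq_zero.1 h]
  · rw [empMean12, ← mul_assoc, mul_one_div_cancel h, one_mul, totalReward]

variable {c L m a : ℝ} {r : ℕ}

theorem totalReward_le_of_abs_sub_empMean12_le (hc : 0 ≤ c) (hA : 0 ≤ c ^ 2 * L) (ha : 0 ≤ a)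
    (hn : (0 : ℝ) < pullCount u i r)
    (hdev : |m - empMean12 y i (pullCount u i r)| ≤ c * √(m * L / pullCount u i r))
    (hx : pullCount u i r * m ≤ a ^ 2 * (c ^ 2 * L)) :
    totalReward u y i r ≤ (a ^ 2 + a) * (c ^ 2 * L) := by
  have hsum := (abs_le.1 (abs_mul_sub_mul_le_sqrt hc hn hdev)).1
  have hmax := add_sqrt_mul_le ha hA hx
  rw [totalReward_eq_mul_empMean12]
  linarith

theorem lt_totalReward_of_abs_sub_empMean12_le (hc : 0 ≤ c) (hA : 0 ≤ c ^ 2 * L) (ha : 1 < a)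
    (hn : (0 : ℝ) < pullCount u i r)
    (hdev : |m - empMean12 y i (pullCount u i r)| ≤ c * √(m * L / pullCount u i r))
    (hx : a ^ 2 * (c ^ 2 * L) < pullCount u i r * m) :
    (a ^ 2 - a) * (c ^ 2 * L) < totalReward u y i r := by
  have hsum := (abs_le.1 (abs_mul_sub_mul_le_sqrt hc hn hdev)).2
  have hmin := lt_sub_sqrt_mul ha hA hx
  rw [totalReward_eq_mul_empMean12]
  linarith

end UniformSampling

section GoodEvent

variable {k T : ℕ}

/-- The event `E1`: from round `r₀` on, every arm has been pulled between one half and three halves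
of its expected number of times. The real threshold `r₀` is `128 k S` in the paper. -/
def NearUniform (u : Fin T → Fin k) (r₀ : ℝ) : Prop :=
  ∀ r : ℕ, r₀ ≤ r → r ≤ T → ∀ i : Fin k,
    (r : ℝ) / (2 * k) ≤ pullCount u i r ∧ (pullCount u i r : ℝ) ≤ 3 * r / (2 * k)

/-- The event `E2`: from `s₀` samples on, the empirical mean of each arm whose mean exceeds `θ`
is within the confidence width `c √(μ i L / s)` of that mean. In the paper `L = log T`,
`θ = μ* / 64` and `s₀ = 64 S`. -/
def ConcentratesAbove (y : Fin k → Fin T → ℝ) (μ : Fin k → ℝ) (c L θ s₀ : ℝ) : Prop :=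
  ∀ i : Fin k, θ < μ i → ∀ s : ℕ, s₀ ≤ s → s ≤ T →
    |μ i - empMean12 y i s| ≤ c * √(μ i * L / s)

/-- The event `E3`: from `s₀` samples on, the empirical mean of each arm whose mean is at most `θ`
stays below `b`. In the paper `θ = μ* / 64`, `b = μ* / 32` and `s₀ = 64 S`. -/
def StaysLowBelow (y : Fin k → Fin T → ℝ) (μ : Fin k → ℝ) (θ b s₀ : ℝ) : Prop :=
  ∀ j : Fin k, μ j ≤ θ → ∀ s : ℕ, s₀ ≤ s → s ≤ T → empMean12 y j s < b

variable {u : Fin T → Fin k} {y : Fin k → Fin T → ℝ} {i : Fin k}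

theorem NearUniform.div_le_pullCount_ceil {x : ℝ} (h : NearUniform u x) (hxT : x ≤ T)
    (i : Fin k) : x / (2 * k) ≤ pullCount u i ⌈x⌉₊ :=
  calc x / (2 * k) ≤ (⌈x⌉₊ : ℝ) / (2 * k) := by gcongr; exact Nat.le_ceil x
    _ ≤ pullCount u i ⌈x⌉₊ := (h _ (Nat.le_ceil x) (Nat.ceil_le.2 hxT) i).1

theorem NearUniform.pullCount_ceil_le {x : ℝ} (h : NearUniform u x) (hx : 0 ≤ x) (hxT : x ≤ T)
    (i : Fin k) : (pullCount u i ⌈x⌉₊ : ℝ) ≤ 3 * (x + 1) / (2 * k) :=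
  calc (pullCount u i ⌈x⌉₊ : ℝ) ≤ 3 * ⌈x⌉₊ / (2 * k) :=
      (h _ (Nat.le_ceil x) (Nat.ceil_le.2 hxT) i).2
    _ ≤ 3 * (x + 1) / (2 * k) := by gcongr; exact (Nat.ceil_lt_add_one hx).le

theorem NearUniform.div_lt_pullCount_floor {r₀ x : ℝ} (h : NearUniform u r₀) (hr₀ : r₀ + 1 ≤ x)
    (hxT : x ≤ T) (i : Fin k) : (x - 1) / (2 * k) < pullCount u i ⌊x⌋₊ := by
  have hk : (0 : ℝ) < k := Nat.cast_pos.2 i.pos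
  have hfloor : x - 1 < ⌊x⌋₊ := Nat.sub_one_lt_floor x
  calc (x - 1) / (2 * k) < (⌊x⌋₊ : ℝ) / (2 * k) := by gcongr
    _ ≤ pullCount u i ⌊x⌋₊ := (h _ (by linarith) (Nat.floor_le_of_le hxT) i).1

variable {μ : Fin k → ℝ} {c L S μstar : ℝ}

theorem NearUniform.pullCount_ceil_mem_Icc (h : NearUniform u (128 * k * S)) (hS : 1 / 2 ≤ S)
    (hST : 128 * k * S ≤ T) (i : Fin k) :
    (pullCount u i ⌈128 * k * S⌉₊ : ℝ) ∈ Set.Icc (64 * S) (196 * S) := by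
  have hk : (1 : ℝ) ≤ k := Nat.one_le_cast.2 i.pos
  have hround : 3 / 2 / (k : ℝ) ≤ 3 / 2 := div_le_self (by norm_num) hk
  constructor
  · calc 64 * S = 128 * k * S / (2 * k) := by field_simp; norm_num
      _ ≤ pullCount u i ⌈128 * k * S⌉₊ := h.div_le_pullCount_ceil hST i
  · calc (pullCount u i ⌈128 * k * S⌉₊ : ℝ) ≤ 3 * (128 * k * S + 1) / (2 * k) :=
          h.pullCount_ceil_le (by positivity) hST i
      _ = 192 * S + 3 / 2 / k := by field_simp; ring
      _ ≤ 196 * S := by linarith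

theorem NearUniform.lt_pullCount_floor (h : NearUniform u (128 * k * S)) (hS : 1 / 2 ≤ S)
    (hST : 968 * k * S ≤ T) (i : Fin k) : 441 * S < pullCount u i ⌊968 * k * S⌋₊ := by
  have hk : (1 : ℝ) ≤ k := Nat.one_le_cast.2 i.pos
  have hround : 1 / 2 / (k : ℝ) ≤ 1 / 2 := div_le_self (by norm_num) hk
  have hkS : 1 / 2 ≤ k * S := hS.trans (le_mul_of_one_le_left (by linarith) hk)
  calc 441 * S < 484 * S - 1 / 2 / k := by linarith
    _ = (968 * k * S - 1) / (2 * k) := by field_simp; ring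
    _ < pullCount u i ⌊968 * k * S⌋₊ := h.div_lt_pullCount_floor (by linarith) hST i

theorem totalReward_le_of_le_ceil (hc : 0 ≤ c) (hS : 1 / 2 ≤ S)
    (hSL : S * μstar = c ^ 2 * L) (hμ₀ : 0 ≤ μstar) (hμ : μ i ≤ μstar)
    (hST : 128 * k * S ≤ T) (hy : ∀ s, 0 ≤ y i s) (hE1 : NearUniform u (128 * k * S))
    (hE2 : ConcentratesAbove y μ c L (μstar / 64) (64 * S))
    (hE3 : StaysLowBelow y μ (μstar / 64) (μstar / 32) (64 * S))
    {r : ℕ} (hr : r ≤ ⌈128 * k * S⌉₊) : totalReward u y i r ≤ 210 * (c ^ 2 * L) := by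
  refine (totalReward_mono u hy hr).trans ?_
  set n := pullCount u i ⌈128 * k * S⌉₊
  obtain ⟨hn_ge, hn_le⟩ : 64 * S ≤ n ∧ n ≤ 196 * S := hE1.pullCount_ceil_mem_Icc hS hST i
  have hnT : n ≤ T := pullCount_le u i _
  have hsum_le : n * μstar ≤ 196 * (c ^ 2 * L) := by
    rw [← hSL, ← mul_assoc]
    exact mul_le_mul_of_nonneg_right hn_le hμ₀
  have hA : 0 ≤ c ^ 2 * L := by rw [← hSL]; positivity
  rcases le_or_gt (μ i) (μstar / 64) with hlow | hhigh
  · calc totalReward u y i ⌈128 * k * S⌉₊ = n * empMean12 y i n :=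
          totalReward_eq_mul_empMean12 u y i _
      _ ≤ n * (μstar / 32) :=
          mul_le_mul_of_nonneg_left (hE3 i hlow n hn_ge hnT).le n.cast_nonneg
      _ ≤ 210 * (c ^ 2 * L) := by linarith
  · have hx : n * μ i ≤ 14 ^ 2 * (c ^ 2 * L) := by
      linarith [mul_le_mul_of_nonneg_left hμ n.cast_nonneg]
    have hreward := totalReward_le_of_abs_sub_empMean12_le hc hA (by norm_num)
      (by linarith) (hE2 i hhigh n hn_ge hnT) hx
    linarith

theorem lt_totalReward_floor (hc : 0 ≤ c) (hS : 1 / 2 ≤ S)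
    (hSL : S * μ i = c ^ 2 * L) (hμ : 0 < μ i) (hST : 968 * k * S ≤ T)
    (hE1 : NearUniform u (128 * k * S))
    (hE2 : ConcentratesAbove y μ c L (μ i / 64) (64 * S)) :
    420 * (c ^ 2 * L) < totalReward u y i ⌊968 * k * S⌋₊ := by
  set n := pullCount u i ⌊968 * k * S⌋₊
  have hn_gt : 441 * S < n := hE1.lt_pullCount_floor hS hST i
  have hA : 0 ≤ c ^ 2 * L := by rw [← hSL]; positivity
  have hx : 21 ^ 2 * (c ^ 2 * L) < n * μ i := by
    rw [← hSL, ← mul_assoc]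
    exact mul_lt_mul_of_pos_right (by linarith) hμ
  have hreward := lt_totalReward_of_abs_sub_empMean12_le hc hA (by norm_num) (by linarith)
    (hE2 i (by linarith) n (by linarith) (pullCount_le u i _)) hx
  linarith

end GoodEvent

theorem half_log_le_log_of_sqrt_le {x w : ℝ} (hx : 0 < x) (h : √x ≤ w) :
    Real.log x / 2 ≤ Real.log w := by
  rw [← Real.log_sqrt hx.le]
  exact Real.log_le_log (Real.sqrt_pos.2 hx) h

theorem exists_first_of_forall_lt_not {P : ℕ → Prop} {a b : ℕ} (ha : ∀ r < a, ¬P r) (hb : P b) :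
    ∃ τ, P τ ∧ (∀ r < τ, ¬P r) ∧ a ≤ τ ∧ τ ≤ b := by
  classical
  have hex : ∃ r, P r := ⟨b, hb⟩
  exact ⟨Nat.find hex, Nat.find_spec hex, fun _ => Nat.find_min hex,
    not_lt.1 fun h => ha _ h (Nat.find_spec hex), Nat.find_min' hex hb⟩

theorem phase_one_stopping_time_bounds_general {c : ℝ} (hc : 1 ≤ c)
    {k T : ℕ} (hT : 2 ≤ T) {μ : Fin k → ℝ}
    {μstar : ℝ} (hμstar : IsGreatest (Set.range μ) μstar) (hμs0 : 0 < μstar) (hμs1 : μstar ≤ 1)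
    {S : ℝ} (hS : S = c ^ 2 * Real.log T / μstar)
    {W : ℝ} (hW1 : √T ≤ W) (hW2 : W ≤ T) (hST : 968 * k * S ≤ T)
    {u : Fin T → Fin k} {y : Fin k → Fin T → ℝ} (hy : ∀ i s, 0 ≤ y i s)
    (hE1 : NearUniform u (128 * k * S))
    (hE2 : ConcentratesAbove y μ c (Real.log T) (μstar / 64) (64 * S))
    (hE3 : StaysLowBelow y μ (μstar / 64) (μstar / 32) (64 * S)) :
    ∃ τ : ℕ, τ ≤ T ∧ (∃ i : Fin k, totalReward u y i τ > 420 * c ^ 2 * Real.log W) ∧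
      (∀ r : ℕ, r < τ → ∀ i : Fin k, totalReward u y i r ≤ 420 * c ^ 2 * Real.log W) ∧
      128 * k * S ≤ (τ : ℝ) ∧ (τ : ℝ) ≤ 968 * k * S := by
  obtain ⟨⟨best, rfl⟩, hub⟩ := hμstar
  have hT' : (2 : ℝ) ≤ T := Nat.ofNat_le_cast.2 hT
  have hL : 1 / 2 ≤ Real.log T := by
    linarith [Real.log_two_gt_d9, Real.log_le_log two_pos hT']
  have hS_ge : 1 / 2 ≤ S := by
    rw [hS, le_div_iff₀ hμs0]
    nlinarith [one_le_pow₀ hc (n := 2)]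
  have hlog_ge : Real.log T / 2 ≤ Real.log W := half_log_le_log_of_sqrt_le (by positivity) hW1
  have hlog_le : Real.log W ≤ Real.log T :=
    Real.log_le_log (lt_of_lt_of_le (by positivity) hW1) hW2
  have hSL : S * μ best = c ^ 2 * Real.log T := by rw [hS, div_mul_cancel₀ _ hμs0.ne']
  have hbefore : ∀ r < ⌈128 * k * S⌉₊, ¬∃ i, totalReward u y i r > 420 * c ^ 2 * Real.log W := by
    rintro r hr ⟨i, hi⟩
    refine hi.not_ge ?_
    calc totalReward u y i r ≤ 210 * (c ^ 2 * Real.log T) :=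
          totalReward_le_of_le_ceil (by linarith) hS_ge hSL hμs0.le
            (hub ⟨i, rfl⟩) (by linarith) (hy i) hE1 hE2 hE3 hr.le
      _ = 420 * c ^ 2 * (Real.log T / 2) := by ring
      _ ≤ 420 * c ^ 2 * Real.log W := by gcongr
  have hafter : 420 * c ^ 2 * Real.log W < totalReward u y best ⌊968 * k * S⌋₊ :=
    calc 420 * c ^ 2 * Real.log W ≤ 420 * c ^ 2 * Real.log T := by gcongr
      _ = 420 * (c ^ 2 * Real.log T) := mul_assoc _ _ _
      _ < totalReward u y best ⌊968 * k * S⌋₊ :=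
          lt_totalReward_floor (by linarith) hS_ge hSL hμs0 hST hE1 hE2
  obtain ⟨τ, hτ, hmin, hge, hle⟩ := exists_first_of_forall_lt_not hbefore ⟨best, hafter⟩
  exact ⟨τ, hle.trans (Nat.floor_le_of_le hST), hτ,
    fun r hr i => not_lt.1 fun hi => hmin r hr ⟨i, hi⟩,
    Nat.ceil_le.1 hge, (Nat.le_floor_iff (by positivity)).1 hle⟩

/-- Lemma tau:anytime (with `c = 3`): under the good-event assumptions `E1`, `E2`, `E3`,
there is a round `r ≤ T` of uniform sampling at which some arm's total observed reward
exceeds `420 c² log W`, and the least such round `τ` satisfies `128 k S ≤ τ ≤ 968 k S`. -/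
theorem phase_one_stopping_time_bounds (c : ℝ) (hc : c = 3)
    (k T : ℕ) (hk : 2 ≤ k) (hT : 2 ≤ T)
    (μ : Fin k → ℝ) (hμ : ∀ i, μ i ∈ Set.Icc (0 : ℝ) 1)
    (μstar : ℝ) (hμstar : IsGreatest (Set.range μ) μstar) (hμs0 : 0 < μstar)
    (S : ℝ) (hS : S = c ^ 2 * Real.log T / μstar)
    (W : ℝ) (hW1 : Real.sqrt T ≤ W) (hW2 : W ≤ T)
    (hST : 968 * k * S ≤ (T : ℝ))
    (u : Fin T → Fin k)
    (y : Fin k → Fin T → ℝ) (hy : ∀ i s, y i s ∈ Set.Icc (0 : ℝ) 1)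
    (hE1 : ∀ r : ℕ, 128 * k * S ≤ (r : ℝ) → r ≤ T → ∀ i : Fin k,
      (r : ℝ) / (2 * k) ≤ (pullCount u i r : ℝ) ∧
        (pullCount u i r : ℝ) ≤ 3 * r / (2 * k))
    (hE2 : ∀ i : Fin k, μ i > μstar / 64 → ∀ s : ℕ, 64 * S ≤ (s : ℝ) → s ≤ T →
      |μ i - empMean12 y i s| ≤ c * Real.sqrt (μ i * Real.log T / s))
    (hE3 : ∀ j : Fin k, μ j ≤ μstar / 64 → ∀ s : ℕ, 64 * S ≤ (s : ℝ) → s ≤ T →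
      empMean12 y j s < μstar / 32) :
    ∃ τ : ℕ, τ ≤ T ∧ (∃ i : Fin k, totalReward u y i τ > 420 * c ^ 2 * Real.log W) ∧
      (∀ r : ℕ, r < τ → ∀ i : Fin k, totalReward u y i r ≤ 420 * c ^ 2 * Real.log W) ∧
      128 * k * S ≤ (τ : ℝ) ∧ (τ : ℝ) ≤ 968 * k * S := by
  subst hc
  exact phase_one_stopping_time_bounds_general (by norm_num) hT hμstar hμs0
    (hμstar.1.elim fun i hi => hi ▸ (hμ i).2) hS hW1 hW2 hST (fun i s => (hy i s).1) hE1 hE2 hE3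
end

section
/- Fix c = 3. Let T ≥ 2 be an integer and W a real with √T ≤ W ≤ T, let μ* ∈ (0, 1], set S := c²·log T/μ*, let n be a positive integer with n ≥ 64S, and let μ̂ ≥ 0 be a real with |μ* − μ̂| ≤ c√(μ*·log T/n). Then μ̂ + 2c√(2·μ̂·log W/n) ≥ μ*. (Deterministic core of Lemma lem:emp:anytime: under the good event E, the Nash confidence bound of the optimal arm in the Modified NCB algorithm is at least μ* throughout Phase 2.) -/
/-!
Once `n ≥ (16 / 9) S`, the deviation `c √(μ* log T / n)` is at most `3 μ* / 4`, so `μ̂ ≥ μ* / 4`.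
Since also `log T ≤ 2 log W`, we get `μ* log T ≤ 4 · (2 μ̂ log W)`: the confidence width at `μ̂`
is at least the deviation that `μ̂` may have from `μ*`.
-/

theorem log_le_two_mul_log_of_sqrt_le {x y : ℝ} (hx : 0 < x) (h : √x ≤ y) :
    Real.log x ≤ 2 * Real.log y := by
  have hlog : Real.log √x ≤ Real.log y := Real.log_le_log (Real.sqrt_pos.2 hx) h
  rw [Real.log_sqrt hx.le] at hlog
  linarith

theorem mul_sqrt_mul_div_le_mul {c ε μ l n : ℝ} (hc : 0 ≤ c) (hε : 0 ≤ ε) (hμ : 0 < μ)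
    (hn : 0 < n) (h : c ^ 2 * l / μ ≤ ε ^ 2 * n) : c * √(μ * l / n) ≤ ε * μ :=
  calc c * √(μ * l / n) = √(c ^ 2 * (μ * l / n)) := by
        rw [Real.sqrt_mul (sq_nonneg c), Real.sqrt_sq hc]
    _ = √(c ^ 2 * l / μ / n * μ ^ 2) := by congr 1; field_simp
    _ ≤ √(ε ^ 2 * μ ^ 2) := by
        have hdiv : c ^ 2 * l / μ / n ≤ ε ^ 2 := (div_le_iff₀ hn).2 h
        gcongr
    _ = ε * μ := by rw [← mul_pow, Real.sqrt_sq (mul_nonneg hε hμ.le)]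

theorem sqrt_mul_div_le_two_mul_sqrt {μ ν l m n : ℝ} (hν : 0 ≤ ν) (hl : 0 ≤ l) (hn : 0 ≤ n)
    (hμν : μ ≤ 4 * ν) (hlm : l ≤ 2 * m) : √(μ * l / n) ≤ 2 * √(2 * ν * m / n) :=
  calc √(μ * l / n) ≤ √(4 * ν * (2 * m) / n) := by gcongr
    _ = √(2 ^ 2 * (2 * ν * m / n)) := by congr 1; ring
    _ = 2 * √(2 * ν * m / n) := by
        rw [Real.sqrt_mul (sq_nonneg 2), Real.sqrt_sq zero_le_two]

theorem modified_ncb_of_optimal_arm_ge_mean_general {c T W μ μhat n : ℝ} (hc : 0 ≤ c)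
    (hT : 1 ≤ T) (hW : √T ≤ W) (hμ : 0 < μ) (hn : 0 < n)
    (hS : 16 / 9 * (c ^ 2 * Real.log T / μ) ≤ n)
    (hdev : μ - μhat ≤ c * √(μ * Real.log T / n)) :
    μ ≤ μhat + 2 * c * √(2 * μhat * Real.log W / n) := by
  have hradius : c * √(μ * Real.log T / n) ≤ 3 / 4 * μ :=
    mul_sqrt_mul_div_le_mul hc (by norm_num) hμ hn (by linarith)
  have hquarter : μ ≤ 4 * μhat := by linarith
  have hwidth : √(μ * Real.log T / n) ≤ 2 * √(2 * μhat * Real.log W / n) :=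
    sqrt_mul_div_le_two_mul_sqrt (by linarith) (Real.log_nonneg hT) hn.le hquarter
      (log_le_two_mul_log_of_sqrt_le (by linarith) hW)
  calc μ ≤ μhat + c * √(μ * Real.log T / n) := by linarith
    _ ≤ μhat + c * (2 * √(2 * μhat * Real.log W / n)) := by gcongr
    _ = μhat + 2 * c * √(2 * μhat * Real.log W / n) := by ring

/-- Deterministic core of Lemma lem:emp:anytime (with `c = 3`): if `n ≥ 64 S` where
`S = c² log T / μ*`, and `|μ* − μ̂| ≤ c√(μ* log T / n)`, then the Nash confidence bound
`μ̂ + 2c√(2 μ̂ log W / n)` is at least `μ*`. -/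
theorem modified_ncb_of_optimal_arm_ge_mean (c : ℝ) (hc : c = 3)
    (T : ℕ) (hT : 2 ≤ T) (W : ℝ) (hW1 : Real.sqrt T ≤ W) (hW2 : W ≤ T)
    (μstar : ℝ) (hμs0 : 0 < μstar) (hμs1 : μstar ≤ 1)
    (S : ℝ) (hS : S = c ^ 2 * Real.log T / μstar)
    (n : ℕ) (hn0 : 0 < n) (hn : 64 * S ≤ (n : ℝ))
    (μhat : ℝ) (hμhat : 0 ≤ μhat)
    (hconc : |μstar - μhat| ≤ c * Real.sqrt (μstar * Real.log T / n)) :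
    μhat + 2 * c * Real.sqrt (2 * μhat * Real.log W / n) ≥ μstar := by
  subst hc hS
  exact modified_ncb_of_optimal_arm_ge_mean_general (by norm_num) (by norm_cast; lia) hW1 hμs0
    (mod_cast hn0) (by linarith) ((le_abs_self _).trans hconc)
end

section
/- Fix c = 3. Let T ≥ 2 be an integer, let μ* ∈ (0, 1], set S := c²·log T/μ*, let μ be a real with 0 < μ ≤ μ*, let n be a positive integer with n ≥ 64S, and let μ̂ ≥ 0 be a real such that |μ − μ̂| ≤ c√(μ·log T/n) and μ̂ + 2c√(2·μ̂·log T/n) ≥ μ*. Then μ ≥ μ* − 4c√(μ*·log T/n). (Deterministic core of Lemma lem:suboptimal_arms:anytime: any arm pulled in Phase 2 of the Modified NCB algorithm, with n = T_i − 1 samples, has mean close to the optimal μ*.) -/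
/-!
Both confidence widths are nondecreasing in the mean at which they are evaluated. A bound
`x ≤ y + w y` with `w` monotone and nonnegative therefore gives `x ≤ y + w x`: either `x ≤ y`, or
`w y ≤ w x`. Applied first to the Nash confidence bound and then to the concentration bound, this
moves both widths to `μ*`, where they add up to `(1 + 2√2) c √(μ* r)` with `r = log T / n`, and
`1 + 2√2 ≤ 4`.
-/

open scoped NNReal

section MonotoneWidth

variable {α : Type*} [LinearOrder α]

theorem le_add_of_le_add_of_monotone [AddZeroClass α] [AddLeftMono α] {w : α → α} {x y : α}
    (hw : Monotone w) (hwx : 0 ≤ w x) (h : x ≤ y + w y) : x ≤ y + w x := by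
  rcases le_total x y with hxy | hyx
  · exact hxy.trans (le_add_of_nonneg_right hwx)
  · exact h.trans (by gcongr; exact hw hyx)

theorem le_add_add_of_monotone_of_monotone [AddMonoid α] [AddLeftMono α] [AddRightMono α]
    {v w : α → α} {x y z : α} (hv : Monotone v) (hw : Monotone w) (hvx : 0 ≤ v x) (hwx : 0 ≤ w x)
    (hyz : y ≤ z + v z) (hxy : x ≤ y + w y) : x ≤ z + (v x + w x) := by
  have hxy' : x ≤ y + w x := le_add_of_le_add_of_monotone hw hwx hxy
  have hxz : x ≤ z + (v z + w x) := calc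
    x ≤ y + w x := hxy'
    _ ≤ z + v z + w x := by gcongr
    _ = z + (v z + w x) := add_assoc ..
  exact le_add_of_le_add_of_monotone (w := fun t ↦ v t + w x) (hv.add_const _)
    (add_nonneg hvx hwx) hxz

end MonotoneWidth

theorem monotone_const_mul_sqrt {a : ℝ} (ha : 0 ≤ a) : Monotone fun t ↦ a * √t :=
  Real.sqrt_monotone.const_mul ha

theorem le_add_mul_sqrt_of_le_add_mul_sqrt {a b x y z : ℝ} (ha : 0 ≤ a) (hb : 0 ≤ b)
    (hyz : y ≤ z + a * √z) (hxy : x ≤ y + b * √y) : x ≤ z + (a + b) * √x := by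
  rw [add_mul]
  exact le_add_add_of_monotone_of_monotone (monotone_const_mul_sqrt ha) (monotone_const_mul_sqrt hb)
    (by positivity) (by positivity) hyz hxy

theorem one_add_two_mul_sqrt_two_le_four : 1 + 2 * √2 ≤ 4 := by
  have : √2 ≤ 3 / 2 := Real.sqrt_le_iff.mpr (by norm_num)
  linarith

theorem modified_mean_of_pulled_arm_close_to_optimal_general {c μ μhat μstar : ℝ} {r : ℝ≥0}
    (hc : 0 ≤ c) (hμ : 0 ≤ μ) (hμhat : 0 ≤ μhat) (hμstar : 0 ≤ μstar)
    (hconc : μhat - μ ≤ c * √(μ * r))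
    (hncb : μstar ≤ μhat + 2 * c * √(2 * μhat * r)) :
    μstar - 4 * c * √(μstar * r) ≤ μ := by
  have hconc' : μhat ≤ μ + c * √r * √μ := by
    rw [Real.sqrt_mul hμ] at hconc
    linarith
  have hncb' : μstar ≤ μhat + 2 * √2 * (c * √r) * √μhat := by
    rw [Real.sqrt_mul (by positivity), Real.sqrt_mul zero_le_two] at hncb
    linarith
  have hsum : μstar ≤ μ + (c * √r + 2 * √2 * (c * √r)) * √μstar :=
    le_add_mul_sqrt_of_le_add_mul_sqrt (by positivity) (by positivity) hconc' hncb'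
  rw [sub_le_iff_le_add']
  calc
    μstar ≤ μ + (c * √r + 2 * √2 * (c * √r)) * √μstar := hsum
    _ = μ + (1 + 2 * √2) * (c * √(μstar * r)) := by rw [Real.sqrt_mul hμstar]; ring
    _ ≤ μ + 4 * (c * √(μstar * r)) := by gcongr; exact one_add_two_mul_sqrt_two_le_four
    _ = 4 * c * √(μstar * r) + μ := by ring

/-- Deterministic core of Lemma lem:suboptimal_arms:anytime (with `c = 3`): any arm with
mean `μ ≤ μ*`, empirical mean `μ̂` based on `n ≥ 64 S` samples (`S = c² log T / μ*`),
satisfying the concentration bound `|μ − μ̂| ≤ c√(μ log T / n)` and having Nash confidence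
bound `μ̂ + 2c√(2 μ̂ log T / n) ≥ μ*`, has mean `μ ≥ μ* − 4c√(μ* log T / n)`. -/
theorem modified_mean_of_pulled_arm_close_to_optimal (c : ℝ) (hc : c = 3)
    (T : ℕ) (hT : 2 ≤ T)
    (μstar : ℝ) (hμs0 : 0 < μstar) (hμs1 : μstar ≤ 1)
    (S : ℝ) (hS : S = c ^ 2 * Real.log T / μstar)
    (μ : ℝ) (hμ0 : 0 < μ) (hμμs : μ ≤ μstar)
    (n : ℕ) (hn0 : 0 < n) (hn : 64 * S ≤ (n : ℝ))
    (μhat : ℝ) (hμhat : 0 ≤ μhat)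
    (hconc : |μ - μhat| ≤ c * Real.sqrt (μ * Real.log T / n))
    (hncb : μhat + 2 * c * Real.sqrt (2 * μhat * Real.log T / n) ≥ μstar) :
    μ ≥ μstar - 4 * c * Real.sqrt (μstar * Real.log T / n) := by
  simp only [mul_div_assoc] at hconc hncb ⊢
  exact modified_mean_of_pulled_arm_close_to_optimal_general (r := ⟨Real.log T / n, by positivity⟩)
    (hc ▸ zero_le_three) hμ0.le hμhat hμs0.le (abs_sub_le_iff.mp hconc).2 hncb
end
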